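/- arXiv:2401.01047 — 3 statements merged into one kernel-verified Lean document; each statement's English description precedes it below -/
import Mathlib

section
/- Let k ≥ 3 be an integer, γ > 0, and 0 < δ ≤ Δ ≤ 1. Let (ζ_s), (b_s), (c_s), (z_s) be real sequences satisfying |ζ_s − 1| ≤ δ, |b_s| ≤ δ, |c_s − 1| ≤ δ for all s, and let (x_s) satisfy x_{s+1} = γ ζ_s (x_s + b_s + c_s z_s)^{k−1}. Let b̄_0 ≥ 0 and b̄_{s+1} = γ (1+Δ)^k · b̄_s^{k−1}. If |x_0| ≤ b̄_0 and |z_s| ≤ (Δ b̄_s − δ)/(1+δ) for all s ∈ ℕ, then |x_s| ≤ b̄_s for all s ∈ ℕ. -/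
/-!
The bound on `z s` is calibrated so that `b s + c s * z s` has size at most `Δ * bb s`. Under the
induction hypothesis the base of the power is therefore at most `(1 + Δ) * bb s`, which contributes
`k - 1` factors `1 + Δ` to the next term; the `k`-th factor bounds `ζ s`.
-/

section SeminormedRing

variable {R : Type*} [SeminormedRing R] [NormOneClass R]

theorem norm_le_one_add_of_norm_sub_one_le {a : R} {δ : ℝ} (ha : ‖a - 1‖ ≤ δ) : ‖a‖ ≤ 1 + δ :=
  calc
    ‖a‖ ≤ ‖(1 : R)‖ + ‖a - 1‖ := norm_le_norm_add_norm_sub' a 1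
    _ ≤ 1 + δ := by rw [norm_one]; gcongr

theorem norm_add_mul_le_of_norm_le_div {b c z : R} {δ η : ℝ} (hb : ‖b‖ ≤ δ) (hc : ‖c - 1‖ ≤ δ)
    (hz : ‖z‖ ≤ (η - δ) / (1 + δ)) : ‖b + c * z‖ ≤ η := by
  have hδ : 0 < 1 + δ := by linarith [norm_nonneg b]
  calc
    ‖b + c * z‖ ≤ ‖b‖ + ‖c‖ * ‖z‖ := norm_add_le_of_le le_rfl (norm_mul_le c z)
    _ ≤ δ + (1 + δ) * ((η - δ) / (1 + δ)) := by
      gcongr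
      exact norm_le_one_add_of_norm_sub_one_le hc
    _ = η := by rw [mul_div_cancel₀ _ hδ.ne', add_sub_cancel]

theorem norm_mul_mul_pow_le {γ ζ y : R} {M B : ℝ} (d : ℕ) (hζ : ‖ζ‖ ≤ M) (hy : ‖y‖ ≤ M * B) :
    ‖γ * ζ * y ^ d‖ ≤ ‖γ‖ * M ^ (d + 1) * B ^ d := by
  have hM : 0 ≤ M := (norm_nonneg ζ).trans hζ
  calc
    ‖γ * ζ * y ^ d‖ ≤ ‖γ‖ * ‖ζ‖ * ‖y‖ ^ d :=
      norm_mul_le_of_le (norm_mul_le γ ζ) (norm_pow_le y d)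
    _ ≤ ‖γ‖ * M * (M * B) ^ d := by gcongr
    _ = ‖γ‖ * M ^ (d + 1) * B ^ d := by ring

theorem perturbed_polynomial_recursion_upper_comparison_general (d : ℕ) {γ : R} {δ Δ : ℝ}
    (hδΔ : δ ≤ Δ) {ζ b c z x : ℕ → R}
    (hζ : ∀ s, ‖ζ s - 1‖ ≤ δ) (hb : ∀ s, ‖b s‖ ≤ δ) (hc : ∀ s, ‖c s - 1‖ ≤ δ)
    (hx : ∀ s, x (s + 1) = γ * ζ s * (x s + b s + c s * z s) ^ d)
    {bb : ℕ → ℝ} (hbb : ∀ s, ‖γ‖ * (1 + Δ) ^ (d + 1) * bb s ^ d ≤ bb (s + 1))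
    (hx0 : ‖x 0‖ ≤ bb 0) (hz : ∀ s, ‖z s‖ ≤ (Δ * bb s - δ) / (1 + δ)) (s : ℕ) :
    ‖x s‖ ≤ bb s := by
  induction s with
  | zero => exact hx0
  | succ s ih =>
    have hζs : ‖ζ s‖ ≤ 1 + Δ := norm_le_one_add_of_norm_sub_one_le ((hζ s).trans hδΔ)
    have hbase : ‖x s + b s + c s * z s‖ ≤ (1 + Δ) * bb s := by
      rw [add_assoc, one_add_mul]
      exact norm_add_le_of_le ih (norm_add_mul_le_of_norm_le_div (hb s) (hc s) (hz s))
    rw [hx]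
    exact (norm_mul_mul_pow_le d hζs hbase).trans (hbb s)

end SeminormedRing

/-- deterministic upper comparison for the perturbed polynomial recursion. -/
theorem perturbed_polynomial_recursion_upper_comparison
    (k : ℕ) (hk : 3 ≤ k) (γ δ Δ : ℝ) (hγ : 0 < γ) (hδ : 0 < δ) (hδΔ : δ ≤ Δ) (hΔ : Δ ≤ 1)
    (ζ b c z x : ℕ → ℝ)
    (hζ : ∀ s, |ζ s - 1| ≤ δ) (hb : ∀ s, |b s| ≤ δ) (hc : ∀ s, |c s - 1| ≤ δ)
    (hx : ∀ s, x (s + 1) = γ * ζ s * (x s + b s + c s * z s) ^ (k - 1))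
    (bb : ℕ → ℝ) (hbb0 : 0 ≤ bb 0)
    (hbb : ∀ s, bb (s + 1) = γ * (1 + Δ) ^ k * bb s ^ (k - 1))
    (hx0 : |x 0| ≤ bb 0)
    (hz : ∀ s : ℕ, |z s| ≤ (Δ * bb s - δ) / (1 + δ)) :
    ∀ s : ℕ, |x s| ≤ bb s := by
  obtain ⟨d, rfl⟩ : ∃ d, k = d + 1 := ⟨k - 1, by lia⟩
  exact perturbed_polynomial_recursion_upper_comparison_general d hδΔ hζ hb hc hx
    (fun s => by rw [hbb, Real.norm_of_nonneg hγ.le, Nat.add_sub_cancel]) hx0 hz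
end

section
/- Let C_k = (k−2)^{k−2}/(k−1)^{k−1}, and define M(k, γ_n, δ) := (1/(k−2)) · (C_k/(γ_n(1+δ)))^{1/(k−2)} and N(k, γ_n, δ) := (1/(1+δ)) · (C_k/(γ_n(1+δ)))^{1/(k−2)} − δ/(1+δ). Then for any T ∈ ℕ, with probability at least 1 − 2T · Φ(−N(k, γ_n, δ)), one has max_{0 ≤ t ≤ T} |X_t| ≤ M(k, γ_n, δ), where Φ denotes the standard Gaussian cumulative distribution function. -/
open MeasureTheory ProbabilityTheory Filter Real

/-- The standard Gaussian cumulative distribution function `Φ`. -/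
noncomputable def stdGaussCDF (x : ℝ) : ℝ := (gaussianReal 0 1 (Set.Iic x)).toReal

/-- `C_k = (k-2)^{k-2}/(k-1)^{k-1}`. -/
noncomputable def Ckconst (k : ℕ) : ℝ := ((k : ℝ) - 2) ^ (k - 2) / ((k : ℝ) - 1) ^ (k - 1)

/-!
Write `β = γ (1 + δ)`. On the event that `|Z t| ≤ N` for all `t < T`, one step of the process
satisfies `|X (t + 1)| ≤ β (|X t| + δ + (1 + δ) N) ^ (k - 1)`. The threshold `N` is chosen so that
`δ + (1 + δ) N` is the shift `a` for which the graph of `x ↦ β (x + a) ^ (k - 1)` touches the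
diagonal, and `M` is the point of contact. As a fixed point of this increasing map, `M` bounds the
whole orbit, and a union bound over the symmetric tails of `Z 0, …, Z (T - 1)` controls the
exceptional event.
-/

section CriticalShift

/-- The shift `a` for which `x ↦ β (x + a) ^ (k - 1)` is tangent to the identity on `x ≥ 0`; the
point of tangency is `a / (k - 2)`. -/
noncomputable def criticalShift (k : ℕ) (β : ℝ) : ℝ := (Ckconst k / β) ^ (1 / ((k : ℝ) - 2))

/-- The bound `M(k, γ, δ)` on the process: the point of tangency for `β = γ (1 + δ)`. -/
noncomputable def trappingRadius (k : ℕ) (γ δ : ℝ) : ℝ :=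
  1 / ((k : ℝ) - 2) * criticalShift k (γ * (1 + δ))

/-- The noise level `N(k, γ, δ)`: the solution of `δ + (1 + δ) N = a`, where `a` is the critical
shift for `β = γ (1 + δ)`. -/
noncomputable def noiseThreshold (k : ℕ) (γ δ : ℝ) : ℝ :=
  1 / (1 + δ) * criticalShift k (γ * (1 + δ)) - δ / (1 + δ)

variable {k : ℕ} {β γ δ : ℝ}

lemma Ckconst_add_two (m : ℕ) : Ckconst (m + 2) = (m : ℝ) ^ m / ((m : ℝ) + 1) ^ (m + 1) := by
  have cast_sub_two : ((m + 2 : ℕ) : ℝ) - 2 = m := by push_cast; ring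
  have cast_sub_one : ((m + 2 : ℕ) : ℝ) - 1 = m + 1 := by push_cast; ring
  rw [Ckconst, cast_sub_two, cast_sub_one, Nat.add_sub_cancel, Nat.add_succ_sub_one]

lemma Ckconst_pos (hk : 2 ≤ k) : 0 < Ckconst k := by
  obtain ⟨m, rfl⟩ := Nat.exists_eq_add_of_le' hk
  rw [Ckconst_add_two]
  rcases m.eq_zero_or_pos with rfl | hm
  · norm_num
  · positivity

lemma criticalShift_pos (hk : 2 ≤ k) (hβ : 0 < β) : 0 < criticalShift k β :=
  rpow_pos_of_pos (div_pos (Ckconst_pos hk) hβ) _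

lemma mul_criticalShift_pow (hk : 3 ≤ k) (hβ : 0 < β) :
    β * criticalShift k β ^ (k - 2) = Ckconst k := by
  have hk2 : 2 ≤ k := by lia
  have cast_sub_two : (k : ℝ) - 2 = ((k - 2 : ℕ) : ℝ) := by push_cast [hk2]; rfl
  rw [criticalShift, cast_sub_two, one_div,
    rpow_inv_natCast_pow (div_pos (Ckconst_pos hk2) hβ).le (by lia), mul_div_cancel₀ _ hβ.ne']

lemma Ckconst_mul_pow (hk : 3 ≤ k) :
    Ckconst k * (1 / ((k : ℝ) - 2) + 1) ^ (k - 1) = 1 / ((k : ℝ) - 2) := by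
  obtain ⟨m, rfl⟩ := Nat.exists_eq_add_of_le' (show 2 ≤ k by lia)
  have hm : (0 : ℝ) < m := by exact_mod_cast (show 0 < m by lia)
  have cast_sub_two : ((m + 2 : ℕ) : ℝ) - 2 = m := by push_cast; ring
  rw [Ckconst_add_two, cast_sub_two, Nat.add_succ_sub_one, div_add_one hm.ne', div_pow,
    add_comm 1 (m : ℝ), pow_succ (m : ℝ) m]
  field_simp

lemma isFixedPt_criticalShift (hk : 3 ≤ k) (hβ : 0 < β) :
    Function.IsFixedPt (fun x ↦ β * (x + criticalShift k β) ^ (k - 1))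
      (1 / ((k : ℝ) - 2) * criticalShift k β) := by
  set a := criticalShift k β with ha
  have hpow : a ^ (k - 1) = a ^ (k - 2) * a := by rw [← pow_succ]; congr 1; lia
  calc β * (1 / ((k : ℝ) - 2) * a + a) ^ (k - 1)
      = β * a ^ (k - 2) * (1 / ((k : ℝ) - 2) + 1) ^ (k - 1) * a := by
        rw [← add_one_mul, mul_pow, hpow]; ring
    _ = 1 / ((k : ℝ) - 2) * a := by rw [ha, mul_criticalShift_pow hk hβ, Ckconst_mul_pow hk]

lemma trappingRadius_nonneg (hk : 3 ≤ k) (hγ : 0 < γ) (hδ : 0 ≤ δ) :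
    0 ≤ trappingRadius k γ δ := by
  have hk2 : (2 : ℝ) ≤ k := by exact_mod_cast (show 2 ≤ k by lia)
  exact mul_nonneg (one_div_nonneg.2 (sub_nonneg.2 hk2))
    (criticalShift_pos (by lia) (by positivity)).le

lemma add_mul_noiseThreshold (hδ : 1 + δ ≠ 0) :
    δ + (1 + δ) * noiseThreshold k γ δ = criticalShift k (γ * (1 + δ)) := by
  rw [noiseThreshold]
  field_simp
  ring

lemma mul_trappingRadius_add_pow (hk : 3 ≤ k) (hγ : 0 < γ) (hδ : 0 ≤ δ) :
    γ * (1 + δ) * (trappingRadius k γ δ + (δ + (1 + δ) * noiseThreshold k γ δ)) ^ (k - 1)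
      = trappingRadius k γ δ := by
  rw [add_mul_noiseThreshold (by positivity)]
  exact isFixedPt_criticalShift hk (by positivity)

end CriticalShift

section PerturbedOrbit

variable {γ δ r N : ℝ} {p : ℕ}

lemma abs_le_one_add_of_abs_sub_one_le {y : ℝ} (hy : |y - 1| ≤ δ) : |y| ≤ 1 + δ := by
  calc |y| = |1 + (y - 1)| := by rw [add_sub_cancel]
    _ ≤ 1 + |y - 1| := by simpa only [abs_one] using abs_add_le 1 (y - 1)
    _ ≤ 1 + δ := by gcongr

lemma abs_perturbed_step_le {x z b c w : ℝ} (hγ : 0 ≤ γ) (hx : |x| ≤ r) (hz : |z - 1| ≤ δ)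
    (hb : |b| ≤ δ) (hc : |c - 1| ≤ δ) (hw : |w| ≤ N) :
    |γ * z * (x + b + c * w) ^ p| ≤ γ * (1 + δ) * (r + (δ + (1 + δ) * N)) ^ p := by
  have hδ : 0 ≤ δ := (abs_nonneg b).trans hb
  have hz' : |z| ≤ 1 + δ := abs_le_one_add_of_abs_sub_one_le hz
  have hc' : |c| ≤ 1 + δ := abs_le_one_add_of_abs_sub_one_le hc
  have hsum : |x + b + c * w| ≤ r + (δ + (1 + δ) * N) :=
    calc |x + b + c * w| ≤ |x| + |b| + |c| * |w| := by
          rw [← abs_mul]; exact abs_add_three x b (c * w)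
      _ ≤ r + δ + (1 + δ) * N := by gcongr
      _ = r + (δ + (1 + δ) * N) := add_assoc _ _ _
  rw [abs_mul, abs_mul, abs_pow, abs_of_nonneg hγ]
  gcongr

lemma abs_perturbed_orbit_le {x ζ b c w : ℕ → ℝ} {T : ℕ} (hγ : 0 ≤ γ)
    (hr : γ * (1 + δ) * (r + (δ + (1 + δ) * N)) ^ p ≤ r) (hx0 : |x 0| ≤ r)
    (hx : ∀ t, x (t + 1) = γ * ζ t * (x t + b t + c t * w t) ^ p)
    (hpert : ∀ t, |ζ t - 1| ≤ δ ∧ |b t| ≤ δ ∧ |c t - 1| ≤ δ) (hw : ∀ t < T, |w t| ≤ N) :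
    ∀ t ≤ T, |x t| ≤ r := by
  intro t ht
  induction t with
  | zero => exact hx0
  | succ t ih =>
    obtain ⟨hζ, hb, hc⟩ := hpert t
    rw [hx]
    exact (abs_perturbed_step_le hγ (ih (by lia)) hζ hb hc (hw t (by lia))).trans hr

end PerturbedOrbit

section SymmetricNoise

instance isNegInvariant_gaussianReal_zero (v : NNReal) : (gaussianReal 0 v).IsNegInvariant where
  neg_eq_self := by simpa only [neg_zero] using! gaussianReal_map_neg (μ := 0) (v := v)

lemma measure_lt_abs_le_two_mul (ν : Measure ℝ) [ν.IsNegInvariant] (a : ℝ) :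
    ν {x | a < |x|} ≤ 2 * ν (Set.Iic (-a)) := by
  have hsub : {x : ℝ | a < |x|} ⊆ Set.Iic (-a) ∪ Set.Ici a := by
    intro x (hx : a < |x|)
    rcases lt_abs.1 hx with h | h
    · exact .inr h.le
    · exact .inl (lt_neg_of_lt_neg h).le
  have hsymm : ν (Set.Ici a) = ν (Set.Iic (-a)) := by
    rw [← Measure.measure_neg ν (Set.Ici a), Set.neg_Ici]
  calc ν {x | a < |x|} ≤ ν (Set.Iic (-a)) + ν (Set.Ici a) :=
        (measure_mono hsub).trans (measure_union_le _ _)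
    _ = 2 * ν (Set.Iic (-a)) := by rw [hsymm, two_mul]

variable {Ω ι : Type*} [MeasurableSpace Ω] {μ : Measure Ω} {ν : Measure ℝ} [ν.IsNegInvariant]

lemma measure_exists_lt_abs_le {Z : ι → Ω → ℝ} (hZ : ∀ i, HasLaw (Z i) ν μ) (s : Finset ι)
    (a : ℝ) : μ {ω | ∃ i ∈ s, a < |Z i ω|} ≤ s.card * (2 * ν (Set.Iic (-a))) := by
  have htail : ∀ i ∈ s, μ {ω | a < |Z i ω|} ≤ 2 * ν (Set.Iic (-a)) := fun i _ ↦ by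
    rw [(hZ i).measure_eq (p := fun x ↦ a < |x|) (measurableSet_lt (by fun_prop) (by fun_prop))]
    exact measure_lt_abs_le_two_mul ν a
  calc μ {ω | ∃ i ∈ s, a < |Z i ω|} = μ (⋃ i ∈ s, {ω | a < |Z i ω|}) := by
        congr 1; ext ω; simp
    _ ≤ ∑ i ∈ s, μ {ω | a < |Z i ω|} := measure_biUnion_finset_le _ _
    _ ≤ s.card * (2 * ν (Set.Iic (-a))) := by
        simpa only [nsmul_eq_mul] using Finset.sum_le_card_nsmul _ _ _ htail

lemma ofReal_one_sub_le_measure_forall_abs_le [IsProbabilityMeasure μ] [IsFiniteMeasure ν]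
    {Z : ι → Ω → ℝ} (hZ : ∀ i, HasLaw (Z i) ν μ) (s : Finset ι) (a : ℝ) :
    ENNReal.ofReal (1 - 2 * s.card * ν.real (Set.Iic (-a))) ≤ μ {ω | ∀ i ∈ s, |Z i ω| ≤ a} := by
  have hbad : μ {ω | ∀ i ∈ s, |Z i ω| ≤ a}ᶜ ≤ s.card * (2 * ν (Set.Iic (-a))) := by
    simpa [Set.compl_ofPred] using measure_exists_lt_abs_le hZ s a
  calc ENNReal.ofReal (1 - 2 * s.card * ν.real (Set.Iic (-a)))
      = 1 - s.card * (2 * ν (Set.Iic (-a))) := by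
        rw [ENNReal.ofReal_sub _ (by positivity), ENNReal.ofReal_one,
          ENNReal.ofReal_mul (by positivity), ofReal_measureReal, mul_comm (2 : ℝ),
          ENNReal.ofReal_mul (by positivity), ENNReal.ofReal_natCast, ENNReal.ofReal_ofNat,
          mul_assoc]
    _ ≤ μ {ω | ∀ i ∈ s, |Z i ω| ≤ a} := by
        rw [tsub_le_iff_right, ← measure_univ (μ := μ)]
        exact (measure_univ_le_add_compl _).trans (by gcongr)

end SymmetricNoise

theorem perturbed_process_stays_small_general {k : ℕ} (hk : 3 ≤ k) {γ δ : ℝ} (hγ : 0 < γ)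
    {Ω : Type*} [MeasurableSpace Ω] {μ : Measure Ω} [IsProbabilityMeasure μ]
    {ν : Measure ℝ} [ν.IsNegInvariant] {X ζ b c Z : ℕ → Ω → ℝ}
    (hX0 : ∀ᵐ ω ∂μ, |X 0 ω| ≤ trappingRadius k γ δ)
    (hXrec : ∀ᵐ ω ∂μ, ∀ t,
      X (t + 1) ω = γ * ζ t ω * (X t ω + b t ω + c t ω * Z t ω) ^ (k - 1))
    (hZ : ∀ t, HasLaw (Z t) ν μ)
    (hpert : ∀ᵐ ω ∂μ, ∀ t, |ζ t ω - 1| ≤ δ ∧ |b t ω| ≤ δ ∧ |c t ω - 1| ≤ δ) (T : ℕ) :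
    ENNReal.ofReal (1 - 2 * T * ν.real (Set.Iic (-noiseThreshold k γ δ)))
      ≤ μ {ω | ∀ t ≤ T, |X t ω| ≤ trappingRadius k γ δ} := by
  have hν : IsProbabilityMeasure ν := (hZ 0).isProbabilityMeasure_iff.1 inferInstance
  obtain ⟨ω₀, hω₀⟩ := hpert.exists
  have hδ : 0 ≤ δ := (abs_nonneg _).trans (hω₀ 0).1
  calc ENNReal.ofReal (1 - 2 * T * ν.real (Set.Iic (-noiseThreshold k γ δ)))
      ≤ μ {ω | ∀ t ∈ Finset.range T, |Z t ω| ≤ noiseThreshold k γ δ} := by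
        simpa only [Finset.card_range] using
          ofReal_one_sub_le_measure_forall_abs_le hZ (Finset.range T) (noiseThreshold k γ δ)
    _ ≤ μ {ω | ∀ t ≤ T, |X t ω| ≤ trappingRadius k γ δ} := by
        refine measure_mono_ae ?_
        filter_upwards [hX0, hXrec, hpert] with ω hX0ω hXω hpertω hZω
        exact abs_perturbed_orbit_le hγ.le (mul_trappingRadius_add_pow hk hγ hδ).le hX0ω hXω
          hpertω fun t ht ↦ hZω t (Finset.mem_range.2 ht)

/-- for any `T`, with probability at least `1 − 2TΦ(−N(k,γ,δ))` the perturbed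
polynomial process stays below `M(k,γ,δ)` up to time `T`. -/
theorem perturbed_process_stays_small
    (k : ℕ) (hk : 3 ≤ k) (n : ℕ) (hn : 0 < n) (γ C δ : ℝ) (hγ : 0 < γ) (hC : 0 < C)
    (hδ : δ = (C + 1) * (n : ℝ) ^ (-(1 : ℝ) / 6))
    (Ω : Type) [MeasurableSpace Ω] (μ : Measure Ω) [IsProbabilityMeasure μ]
    (X ζ b c Z : ℕ → Ω → ℝ)
    (hmeas : ∀ t, Measurable (ζ t) ∧ Measurable (b t) ∧ Measurable (c t) ∧ Measurable (Z t))
    (hX0 : ∀ ω, X 0 ω = 0)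
    (hXrec : ∀ t ω, X (t + 1) ω = γ * ζ t ω * (X t ω + b t ω + c t ω * Z t ω) ^ (k - 1))
    (hZlaw : ∀ t, Measure.map (Z t) μ = gaussianReal 0 1)
    (hZindep : ∀ t, Indep (MeasurableSpace.comap (Z t) inferInstance)
      ((⨆ s ∈ Set.Iic t,
          MeasurableSpace.comap (fun ω => (X s ω, ζ s ω, b s ω, c s ω)) inferInstance)
        ⊔ (⨆ s ∈ Set.Iio t, MeasurableSpace.comap (Z s) inferInstance)) μ)
    (hpert : ∀ᵐ ω ∂μ, ∀ t, |ζ t ω - 1| ≤ δ ∧ |b t ω| ≤ δ ∧ |c t ω - 1| ≤ δ)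
    (T : ℕ) :
    ENNReal.ofReal (1 - 2 * T * stdGaussCDF
        (-((1 / (1 + δ)) * (Ckconst k / (γ * (1 + δ))) ^ (1 / ((k : ℝ) - 2)) - δ / (1 + δ))))
      ≤ μ {ω | ∀ t ≤ T,
            |X t ω| ≤ (1 / ((k : ℝ) - 2)) * (Ckconst k / (γ * (1 + δ))) ^ (1 / ((k : ℝ) - 2))} := by
  have hδ0 : 0 ≤ δ := by rw [hδ]; positivity
  exact perturbed_process_stays_small_general hk hγ
    (.of_forall fun ω ↦ by simpa [hX0] using trappingRadius_nonneg hk hγ hδ0)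
    (.of_forall fun ω t ↦ hXrec t ω) (fun t ↦ ⟨(hmeas t).2.2.2.aemeasurable, hZlaw t⟩) hpert T
end

section
/- Assume γ_n = n^{o(1)} and γ_n ≫ (log n)^{−(k−2)/2} as n → ∞, and let ε = ε_k = (6k − 11)/(12(k−1)). Then there is an absolute constant C' > 0 such that for any fixed η ∈ (0,1) and t_n := ⌊(1−η) · log_{k−1}( log_{k−1} n / max{log_{k−1} γ_n, 1} )⌋, for all sufficiently large n: P( max_{0 ≤ t ≤ t_n} |X_t| ≤ n^ε / 2 ) ≥ 1 − n^{−C'}. -/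
open MeasureTheory ProbabilityTheory Filter Real

/-- `log_{k-1}(log_{k-1} n / max(log_{k-1} γ, 1))`, the iterated-logarithm quantity. -/
noncomputable def logTerm (k n : ℕ) (γ : ℝ) : ℝ :=
  Real.logb ((k : ℝ) - 1) (Real.logb ((k : ℝ) - 1) n / max (Real.logb ((k : ℝ) - 1) γ) 1)

/-!
Nothing probabilistic happens beyond a union bound. With overwhelming probability all the noise
variables up to time `T` are at most `log n` in absolute value, and then
`|X_{t+1}| ≤ A (|X_t| + A) ^ m` with `m = k - 1` and `A = O(γ_n + log n)`. This forces doubly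
exponential growth at worst, `|X_t| ≤ A ^ (4 m ^ t)`. Writing `M = max (log γ_n) (log m)`, the time
horizon is chosen such that `m ^ T ≤ (log n / M) ^ (1 - η)`, while `log A ≤ M + O(log log n)`;
since `M = o(log n)` the product `m ^ T * log A` is `o(log n)`, so `A ^ (4 m ^ T)` is smaller than
any fixed power of `n`.
-/

open scoped NNReal

section NoiseBound

variable {Ω : Type*} [MeasurableSpace Ω] {μ : Measure Ω}

lemma hasSubgaussianMGF_of_map_eq_gaussianReal {Z : Ω → ℝ} {v : ℝ≥0}
    (hZ : μ.map Z = gaussianReal 0 v) : HasSubgaussianMGF Z v μ := by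
  have hZm : AEMeasurable Z μ := aemeasurable_of_map_neZero (by rw [hZ]; infer_instance)
  rw [← HasSubgaussianMGF.id_map_iff hZm, hZ]
  exact ⟨integrable_exp_mul_gaussianReal, fun t => by simp [mgf_id_gaussianReal]⟩

lemma measureReal_lt_abs_le_of_hasSubgaussianMGF [IsFiniteMeasure μ] {Z : Ω → ℝ} {v : ℝ≥0}
    (hZ : HasSubgaussianMGF Z v μ) {s : ℝ} (hs : 0 ≤ s) :
    μ.real {ω | s < |Z ω|} ≤ 2 * exp (-s ^ 2 / (2 * v)) := by
  have hsub : {ω | s < |Z ω|} ⊆ {ω | s ≤ Z ω} ∪ {ω | s ≤ (-Z) ω} :=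
    fun _ hω => (lt_abs.1 hω).imp (fun h : s < _ => h.le) (fun h : s < _ => h.le)
  calc μ.real {ω | s < |Z ω|}
      ≤ μ.real {ω | s ≤ Z ω} + μ.real {ω | s ≤ (-Z) ω} :=
        (measureReal_mono hsub).trans (measureReal_union_le _ _)
    _ ≤ exp (-s ^ 2 / (2 * v)) + exp (-s ^ 2 / (2 * v)) :=
        add_le_add (hZ.measure_ge_le hs) (hZ.neg.measure_ge_le hs)
    _ = 2 * exp (-s ^ 2 / (2 * v)) := (two_mul _).symm

lemma measureReal_exists_lt_abs_le_of_hasSubgaussianMGF [IsFiniteMeasure μ] {Z : ℕ → Ω → ℝ}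
    {v : ℝ≥0} (hZ : ∀ t, HasSubgaussianMGF (Z t) v μ) {s : ℝ} (hs : 0 ≤ s) (T : ℕ) :
    μ.real {ω | ∃ t < T, s < |Z t ω|} ≤ T * (2 * exp (-s ^ 2 / (2 * v))) := by
  have hunion : {ω | ∃ t < T, s < |Z t ω|} = ⋃ t ∈ Finset.range T, {ω | s < |Z t ω|} := by
    ext ω; simp
  calc μ.real {ω | ∃ t < T, s < |Z t ω|}
      ≤ ∑ t ∈ Finset.range T, μ.real {ω | s < |Z t ω|} := by
        rw [hunion]; exact measureReal_biUnion_finset_le _ _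
    _ ≤ ∑ _t ∈ Finset.range T, 2 * exp (-s ^ 2 / (2 * v)) :=
        Finset.sum_le_sum fun t _ => measureReal_lt_abs_le_of_hasSubgaussianMGF (hZ t) hs
    _ = T * (2 * exp (-s ^ 2 / (2 * v))) := by simp

lemma ofReal_one_sub_le_measure_of_ae_mem_union [IsProbabilityMeasure μ] {bad good : Set Ω}
    {p : ℝ} (hbad : μ.real bad ≤ p) (hcover : ∀ᵐ ω ∂μ, ω ∈ bad ∪ good) :
    ENNReal.ofReal (1 - p) ≤ μ good := by
  have huniv : 1 ≤ μ.real bad + μ.real good :=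
    calc (1 : ℝ) = μ.real (bad ∪ good) := by
          rw [measureReal_congr (eventuallyEq_univ (s := bad ∪ good).2 hcover), probReal_univ]
      _ ≤ μ.real bad + μ.real good := measureReal_union_le _ _
  rw [← ofReal_measureReal (μ := μ) (s := good)]
  exact ENNReal.ofReal_le_ofReal (by linarith)

end NoiseBound

section Recurrence

lemma le_pow_of_le_mul_add_pow {m : ℕ} (hm : 2 ≤ m) {A : ℝ} (hA : 2 ≤ A) {y : ℕ → ℝ}
    (hy : ∀ t, 0 ≤ y t) (hy0 : y 0 ≤ A) {T : ℕ}
    (hstep : ∀ t < T, y (t + 1) ≤ A * (y t + A) ^ m) :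
    ∀ t ≤ T, y t ≤ A ^ (4 * m ^ t - 3) := by
  intro t
  induction t with
  | zero => simpa using hy0
  | succ t ih =>
    intro ht
    have hmt : 1 ≤ m ^ t := Nat.one_le_pow _ _ (by lia)
    set e := 4 * m ^ t - 3
    have hsum : y t + A ≤ A ^ (e + 1) :=
      calc y t + A ≤ A ^ e + A ^ e :=
            add_le_add (ih (by lia)) (le_self_pow₀ (by linarith) (by lia))
        _ = 2 * A ^ e := (two_mul _).symm
        _ ≤ A * A ^ e := by gcongr
        _ = A ^ (e + 1) := (pow_succ' A e).symm
    have hexp : (e + 1) * m + 1 ≤ 4 * m ^ (t + 1) - 3 := by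
      have hmul : (e + 1) * m + 2 * m = 4 * m ^ (t + 1) := by
        rw [← add_mul, show e + 1 + 2 = 4 * m ^ t by lia, pow_succ, mul_assoc]
      lia
    calc y (t + 1) ≤ A * (y t + A) ^ m := hstep t ht
      _ ≤ A * (A ^ (e + 1)) ^ m := by have := hy t; gcongr
      _ = A ^ ((e + 1) * m + 1) := by rw [← pow_mul, pow_succ']
      _ ≤ A ^ (4 * m ^ (t + 1) - 3) := pow_le_pow_right₀ (by linarith) hexp

lemma abs_perturbed_step_le_s14 {m : ℕ} {g K s x ζ b c z : ℝ} (hg : 0 ≤ g) (hs : 0 ≤ s)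
    (hζ : |ζ| ≤ K) (hb : |b| ≤ K) (hc : |c| ≤ K) (hz : |z| ≤ s) :
    |g * ζ * (x + b + c * z) ^ m| ≤ K * (g + 1 + s) * (|x| + K * (g + 1 + s)) ^ m := by
  have hK : 0 ≤ K := (abs_nonneg b).trans hb
  have hKg : 0 ≤ K * g := mul_nonneg hK hg
  have hKs : 0 ≤ K * s := mul_nonneg hK hs
  have hgain : |g * ζ| ≤ K * (g + 1 + s) :=
    calc |g * ζ| = g * |ζ| := by rw [abs_mul, abs_of_nonneg hg]
      _ ≤ g * K := by gcongr
      _ ≤ K * (g + 1 + s) := by linarith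
  have hbase : |x + b + c * z| ≤ |x| + K * (g + 1 + s) :=
    calc |x + b + c * z| ≤ |x| + |b| + |c * z| := abs_add_three _ _ _
      _ ≤ |x| + K + K * s := by rw [abs_mul]; gcongr
      _ ≤ |x| + K * (g + 1 + s) := by linarith
  rw [abs_mul, abs_pow]
  gcongr

lemma abs_perturbed_process_le {m : ℕ} (hm : 2 ≤ m) {g K s : ℝ} (hg : 0 ≤ g) (hK : 1 ≤ K)
    (hs : 1 ≤ s) {T : ℕ} {x ζ b c z : ℕ → ℝ} (hx0 : x 0 = 0)
    (hrec : ∀ t, x (t + 1) = g * ζ t * (x t + b t + c t * z t) ^ m)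
    (hcoeff : ∀ t, |ζ t| ≤ K ∧ |b t| ≤ K ∧ |c t| ≤ K) (hz : ∀ t < T, |z t| ≤ s) :
    ∀ t ≤ T, |x t| ≤ (K * (g + 1 + s)) ^ (4 * m ^ T) := by
  intro t ht
  have hA : 2 ≤ K * (g + 1 + s) := by nlinarith
  refine (le_pow_of_le_mul_add_pow hm hA (y := fun t => |x t|) (fun _ => abs_nonneg _)
    (by rw [hx0, abs_zero]; linarith) (fun t ht => ?_) t ht).trans ?_
  · obtain ⟨hζ, hb, hc⟩ := hcoeff t
    rw [hrec]
    exact abs_perturbed_step_le_s14 hg (by linarith) hζ hb hc (hz t ht)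
  · have hmono : m ^ t ≤ m ^ T := Nat.pow_le_pow_right (by lia) ht
    exact pow_le_pow_right₀ (by linarith) (by lia)

end Recurrence

theorem ofReal_one_sub_le_measure_forall_abs_perturbed_process_le {Ω : Type*}
    [MeasurableSpace Ω] {μ : Measure Ω} [IsProbabilityMeasure μ] {m : ℕ} (hm : 2 ≤ m)
    {g K s : ℝ} {v : ℝ≥0} (hg : 0 ≤ g) (hK : 1 ≤ K) (hs : 1 ≤ s) {X ζ b c Z : ℕ → Ω → ℝ}
    (hX0 : ∀ ω, X 0 ω = 0)
    (hXrec : ∀ t ω, X (t + 1) ω = g * ζ t ω * (X t ω + b t ω + c t ω * Z t ω) ^ m)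
    (hZ : ∀ t, HasSubgaussianMGF (Z t) v μ)
    (hcoeff : ∀ᵐ ω ∂μ, ∀ t, |ζ t ω| ≤ K ∧ |b t ω| ≤ K ∧ |c t ω| ≤ K) (T : ℕ) :
    ENNReal.ofReal (1 - T * (2 * exp (-s ^ 2 / (2 * v)))) ≤
      μ {ω | ∀ t ≤ T, |X t ω| ≤ (K * (g + 1 + s)) ^ (4 * m ^ T)} := by
  refine ofReal_one_sub_le_measure_of_ae_mem_union
    (measureReal_exists_lt_abs_le_of_hasSubgaussianMGF hZ (by linarith) T) ?_
  filter_upwards [hcoeff] with ω hω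
  refine or_iff_not_imp_left.2 fun hgood => ?_
  have hnoise : ∀ t < T, |Z t ω| ≤ s := by simpa using hgood
  exact abs_perturbed_process_le (x := fun t => X t ω) (ζ := fun t => ζ t ω)
    (b := fun t => b t ω) (c := fun t => c t ω) hm hg hK hs (hX0 ω) (fun t => hXrec t ω) hω hnoise

section LittleO

variable {α : Type*} {l : Filter α} {L M : α → ℝ} {η : ℝ}

lemma isLittleO_div_rpow_mul_self (hL : ∀ᶠ x in l, 0 < L x) (hM : ∀ᶠ x in l, 0 < M x)
    (hML : M =o[l] L) (hη : 0 < η) :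
    (fun x => (L x / M x) ^ (1 - η) * M x) =o[l] L := by
  have hratio : Tendsto (fun x => (M x / L x) ^ η) l (nhds 0) := by
    simpa [zero_rpow hη.ne'] using hML.tendsto_div_nhds_zero.rpow_const (p := η) (.inr hη.le)
  rw [Asymptotics.isLittleO_iff_tendsto' (hL.mono fun x hx h => absurd h hx.ne')]
  refine hratio.congr' ?_
  filter_upwards [hL, hM] with x hLx hMx
  have hq : 0 < M x / L x := div_pos hMx hLx
  calc (M x / L x) ^ η = (M x / L x) ^ (-(1 - η)) * (M x / L x) ^ (1 : ℝ) := by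
        rw [← rpow_add hq]; ring_nf
    _ = (L x / M x) ^ (1 - η) * (M x / L x) := by
        rw [rpow_one, rpow_neg hq.le, ← inv_rpow hq.le, inv_div]
    _ = (L x / M x) ^ (1 - η) * M x / L x := (mul_div_assoc _ _ _).symm

lemma isLittleO_div_rpow_mul_log (hL : Tendsto L l atTop) {a D : ℝ} (ha : 0 < a)
    (hM : ∀ᶠ x in l, a ≤ M x) (hη : 0 < η) (hη1 : η ≤ 1) (hD : 0 < D) :
    (fun x => (L x / M x) ^ (1 - η) * log (D * L x)) =o[l] L := by
  have hpow : (fun x => (L x / M x) ^ (1 - η)) =O[l] fun x => L x ^ (1 - η) := by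
    refine Asymptotics.IsBigO.of_bound ((1 / a) ^ (1 - η)) ?_
    filter_upwards [hL.eventually_gt_atTop 0, hM] with x hLx hMx
    have hMx0 : 0 < M x := ha.trans_le hMx
    rw [norm_of_nonneg (by positivity), norm_of_nonneg (by positivity),
      ← mul_rpow (by positivity) hLx.le]
    refine rpow_le_rpow (by positivity) ?_ (by linarith)
    rw [one_div_mul_eq_div]
    gcongr
  have hlog : (fun x => log (D * L x)) =o[l] fun x => L x ^ η := by
    have hscaled : (fun x => (D * L x) ^ η) =O[l] fun x => L x ^ η := by
      refine Asymptotics.IsBigO.of_bound (D ^ η) ?_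
      filter_upwards [hL.eventually_gt_atTop 0] with x hLx
      rw [mul_rpow hD.le hLx.le, norm_mul, norm_of_nonneg (rpow_nonneg hD.le η)]
    exact ((isLittleO_log_rpow_atTop hη).comp_tendsto (hL.const_mul_atTop hD)).trans_isBigO hscaled
  refine (hpow.mul_isLittleO hlog).congr' .rfl ?_
  filter_upwards [hL.eventually_gt_atTop 0] with x hLx
  rw [← rpow_add hLx, sub_add_cancel, rpow_one]

end LittleO

section TimeHorizon

lemma tendsto_log_natCast_atTop : Tendsto (fun n : ℕ => log n) atTop atTop :=
  tendsto_log_atTop.comp tendsto_natCast_atTop_atTop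

lemma pow_floor_mul_logb_le_rpow {β r θ : ℝ} (hβ : 1 < β) (hr : 1 ≤ r) (hθ : 0 ≤ θ) :
    β ^ ⌊θ * logb β r⌋₊ ≤ r ^ θ :=
  calc β ^ ⌊θ * logb β r⌋₊ = β ^ (⌊θ * logb β r⌋₊ : ℝ) := (rpow_natCast _ _).symm
    _ ≤ β ^ (θ * logb β r) :=
        rpow_le_rpow_of_exponent_le hβ.le (Nat.floor_le (mul_nonneg hθ (logb_nonneg hβ hr)))
    _ = r ^ θ := by
        rw [mul_comm, rpow_mul (by linarith), rpow_logb (by linarith) hβ.ne' (by linarith)]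

/-- The logarithm of the gain `g`, truncated below at `log (k - 1)`: the quantity
`max (log_{k-1} g) 1` of the time horizon `logTerm`, expressed in natural logarithms. -/
noncomputable def logGain (k : ℕ) (g : ℝ) : ℝ := max (log g) (log ((k : ℝ) - 1))

variable {k : ℕ}

lemma log_natCast_sub_one_pos (hk : 3 ≤ k) : 0 < log ((k : ℝ) - 1) := by
  have : (3 : ℝ) ≤ k := by exact_mod_cast hk
  exact log_pos (by linarith)

lemma logGain_pos (hk : 3 ≤ k) (g : ℝ) : 0 < logGain k g :=
  lt_max_of_lt_right (log_natCast_sub_one_pos hk)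

lemma logTerm_eq_logb_log_div_logGain (hk : 3 ≤ k) (n : ℕ) (g : ℝ) :
    logTerm k n g = logb ((k : ℝ) - 1) (log n / logGain k g) := by
  have hpos := log_natCast_sub_one_pos hk
  have hmax : max (logb ((k : ℝ) - 1) g) 1 = logGain k g / log ((k : ℝ) - 1) := by
    rw [logGain, ← max_div_div_right hpos.le, div_self hpos.ne', logb]
  rw [logTerm, hmax, ← log_div_log (x := n), div_div_div_cancel_right₀ hpos.ne']

lemma log_mul_add_one_add_le (hk : 3 ≤ k) {g K s : ℝ} (hg : 0 < g) (hK : 0 < K) (hs : 1 ≤ s) :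
    log (K * (g + 1 + s)) ≤ logGain k g + log (3 * K * s) := by
  have hmax_pos : 0 < max g 1 := lt_max_of_lt_left hg
  have hsum : g + 1 + s ≤ max g 1 * (3 * s) := by
    nlinarith [le_max_left g 1, le_max_right g 1]
  have hlogmax : log (max g 1) ≤ logGain k g := by
    rcases max_choice g 1 with h | h
    · rw [h]; exact le_max_left _ _
    · rw [h, log_one]; exact (logGain_pos hk g).le
  calc log (K * (g + 1 + s)) ≤ log (K * (max g 1 * (3 * s))) := by gcongr
    _ = log (max g 1 * (3 * K * s)) := by ring_nf
    _ = log (max g 1) + log (3 * K * s) := log_mul hmax_pos.ne' (by positivity)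
    _ ≤ logGain k g + log (3 * K * s) := by gcongr

variable {γ : ℕ → ℝ}

lemma eventually_le_rpow_of_tendsto_log_div_log (hγpos : ∀ n, 0 < γ n)
    (hγ : Tendsto (fun n : ℕ => log (γ n) / log n) atTop (nhds 0)) {δ : ℝ} (hδ : 0 < δ) :
    ∀ᶠ n : ℕ in atTop, γ n ≤ (n : ℝ) ^ δ := by
  filter_upwards [hγ.eventually_lt_const hδ, eventually_gt_atTop 1] with n hlt hn
  have hn1 : (1 : ℝ) < n := by exact_mod_cast hn
  rw [div_lt_iff₀ (log_pos hn1)] at hlt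
  exact (le_rpow_iff_log_le (hγpos n) (by linarith)).2 hlt.le

lemma isLittleO_logGain (hk : 3 ≤ k) (hγpos : ∀ n, 0 < γ n)
    (hγ : ∀ δ > (0 : ℝ), ∀ᶠ n : ℕ in atTop, γ n ≤ (n : ℝ) ^ δ) :
    (fun n => logGain k (γ n)) =o[atTop] fun n : ℕ => log n := by
  refine Asymptotics.isLittleO_iff.2 fun δ hδ => ?_
  filter_upwards [hγ δ hδ, tendsto_log_natCast_atTop.eventually_ge_atTop (log ((k : ℝ) - 1) / δ),
    eventually_gt_atTop 0] with n hle hlarge hn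
  rw [norm_of_nonneg (logGain_pos hk _).le, norm_of_nonneg (log_natCast_nonneg n)]
  refine max_le ((le_rpow_iff_log_le (hγpos n) (by exact_mod_cast hn)).1 hle) ?_
  rwa [div_le_iff₀' hδ] at hlarge

variable {η : ℝ}

lemma eventually_pow_floor_logTerm_mul_le (hk : 3 ≤ k)
    (hgain : (fun n => logGain k (γ n)) =o[atTop] fun n : ℕ => log n)
    (hη : 0 < η) (hη1 : η ≤ 1) {D δ : ℝ} (hD : 0 < D) (hδ : 0 < δ) :
    ∀ᶠ n : ℕ in atTop, ((k : ℝ) - 1) ^ ⌊(1 - η) * logTerm k n (γ n)⌋₊ *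
      (logGain k (γ n) + log (D * log n)) ≤ δ * log n := by
  have hk' : (3 : ℝ) ≤ k := by exact_mod_cast hk
  have hlog := tendsto_log_natCast_atTop
  have hgain_term := isLittleO_div_rpow_mul_self (hlog.eventually_gt_atTop 0)
    (.of_forall fun n => logGain_pos hk (γ n)) hgain hη
  have hlog_term := isLittleO_div_rpow_mul_log (M := fun n => logGain k (γ n)) hlog
    (log_natCast_sub_one_pos hk) (.of_forall fun n => le_max_right _ _) hη hη1 hD
  filter_upwards [(hgain_term.add hlog_term).bound hδ, hgain.bound one_pos,
    hlog.eventually_ge_atTop (1 / D)] with n hprod hgain_le hlarge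
  have hpos := logGain_pos hk (γ n)
  have hLpos : 0 < log (n : ℝ) := (one_div_pos.2 hD).trans_le hlarge
  rw [norm_of_nonneg hpos.le, norm_of_nonneg hLpos.le, one_mul] at hgain_le
  have hlogD : 0 ≤ log (D * log n) := log_nonneg ((div_le_iff₀' hD).1 hlarge)
  calc ((k : ℝ) - 1) ^ ⌊(1 - η) * logTerm k n (γ n)⌋₊ * (logGain k (γ n) + log (D * log n))
      ≤ (log n / logGain k (γ n)) ^ (1 - η) * (logGain k (γ n) + log (D * log n)) := by
        rw [logTerm_eq_logb_log_div_logGain hk]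
        gcongr
        exact pow_floor_mul_logb_le_rpow (by linarith) ((one_le_div hpos).2 hgain_le)
          (by linarith)
    _ ≤ δ * log n := by
        rw [mul_add]
        exact (le_norm_self _).trans (hprod.trans_eq (by rw [norm_of_nonneg hLpos.le]))

lemma eventually_pow_floor_logTerm_le_rpow_div_two (hk : 3 ≤ k) (hγpos : ∀ n, 0 < γ n)
    (hgain : (fun n => logGain k (γ n)) =o[atTop] fun n : ℕ => log n)
    (hη : 0 < η) (hη1 : η ≤ 1) {K ε : ℝ} (hK : 0 < K) (hε : 0 < ε) :
    ∀ᶠ n : ℕ in atTop,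
      (K * (γ n + 1 + log n)) ^ (4 * (k - 1) ^ ⌊(1 - η) * logTerm k n (γ n)⌋₊) ≤
        (n : ℝ) ^ ε / 2 := by
  have hk' : (3 : ℝ) ≤ k := by exact_mod_cast hk
  filter_upwards [eventually_pow_floor_logTerm_mul_le hk hgain hη hη1
      (D := 3 * K) (δ := ε / 8) (by positivity) (by positivity),
    tendsto_log_natCast_atTop.eventually_ge_atTop 1,
    tendsto_log_natCast_atTop.eventually_ge_atTop (2 * log 2 / ε), eventually_gt_atTop 0]
    with n hprod hL1 hL2 hn
  have hn0 : (0 : ℝ) < n := by exact_mod_cast hn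
  have hγn := hγpos n
  set T := ⌊(1 - η) * logTerm k n (γ n)⌋₊
  have hpow_nonneg : 0 ≤ ((k : ℝ) - 1) ^ T := pow_nonneg (by linarith) T
  have hexponent : ((4 * (k - 1) ^ T : ℕ) : ℝ) = 4 * ((k : ℝ) - 1) ^ T := by
    push_cast [Nat.cast_sub (show 1 ≤ k by lia)]; rfl
  have hlogA := mul_le_mul_of_nonneg_left (log_mul_add_one_add_le hk hγn hK hL1) hpow_nonneg
  have hlog2 : log 2 ≤ ε / 2 * log n := by
    rw [div_le_iff₀' hε] at hL2; linarith
  rw [← log_le_log_iff (by positivity) (by positivity), log_pow, hexponent,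
    log_div (by positivity) two_ne_zero, log_rpow hn0]
  linarith

lemma eventually_floor_logTerm_le (hk : 3 ≤ k)
    (hgain : (fun n => logGain k (γ n)) =o[atTop] fun n : ℕ => log n)
    (hη : 0 < η) (hη1 : η ≤ 1) :
    ∀ᶠ n : ℕ in atTop, (⌊(1 - η) * logTerm k n (γ n)⌋₊ : ℝ) ≤ n := by
  have hk' : (3 : ℝ) ≤ k := by exact_mod_cast hk
  have hpos := log_natCast_sub_one_pos hk
  filter_upwards [eventually_pow_floor_logTerm_mul_le hk hgain hη hη1 one_pos hpos,
    tendsto_log_natCast_atTop.eventually_ge_atTop 1] with n hprod hL1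
  set T := ⌊(1 - η) * logTerm k n (γ n)⌋₊
  have hfactor : log ((k : ℝ) - 1) ≤ logGain k (γ n) + log (1 * log n) :=
    le_add_of_le_of_nonneg (le_max_right _ _) (log_nonneg (by linarith))
  have hpow : ((k : ℝ) - 1) ^ T ≤ log n := by
    refine le_of_mul_le_mul_right ?_ hpos
    have hpow_nonneg : 0 ≤ ((k : ℝ) - 1) ^ T := pow_nonneg (by linarith) T
    linarith [mul_le_mul_of_nonneg_left hfactor hpow_nonneg]
  calc (T : ℝ) ≤ 2 ^ T := by exact_mod_cast Nat.lt_two_pow_self.le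
    _ ≤ ((k : ℝ) - 1) ^ T := by gcongr; linarith
    _ ≤ log n := hpow
    _ ≤ n := log_le_self n.cast_nonneg

end TimeHorizon

lemma eventually_mul_exp_neg_log_sq_le_rpow {v : ℝ} (hv : 0 < v) (a : ℝ) :
    ∀ᶠ n : ℕ in atTop, n * (2 * exp (-log n ^ 2 / (2 * v))) ≤ (n : ℝ) ^ (-a) := by
  filter_upwards [tendsto_log_natCast_atTop.eventually_ge_atTop 1,
    tendsto_log_natCast_atTop.eventually_ge_atTop (2 * v * (2 + a)), eventually_gt_atTop 0]
    with n hL1 hLa hn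
  have hn0 : (0 : ℝ) < n := by exact_mod_cast hn
  have hsq : (2 + a) * log n ≤ log n ^ 2 / (2 * v) := by
    rw [le_div_iff₀ (by positivity)]
    nlinarith
  have hlog2 : log 2 ≤ log n := by linarith [log_two_lt_d9]
  rw [← log_le_log_iff (by positivity) (by positivity), log_mul hn0.ne' (by positivity),
    log_mul two_ne_zero (exp_ne_zero _), log_exp, log_rpow hn0, neg_div]
  linarith

lemma natCast_rpow_le_one_of_neg (n : ℕ) {p : ℝ} (hp : p < 0) : (n : ℝ) ^ p ≤ 1 := by
  rcases n.eq_zero_or_pos with rfl | hn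
  · simp [zero_rpow hp.ne]
  · exact rpow_le_one_of_one_le_of_nonpos (by exact_mod_cast hn) hp.le

lemma abs_le_add_one_of_abs_sub_one_le {x δ : ℝ} (hx : |x - 1| ≤ δ) : |x| ≤ δ + 1 := by
  simpa using (abs_add_le (x - 1) 1).trans (add_le_add_left hx |1|)

lemma abs_coeff_le_of_abs_perturbation_le {ζ b c δ B : ℝ}
    (hpert : |ζ - 1| ≤ δ ∧ |b| ≤ δ ∧ |c - 1| ≤ δ) (hδ : δ ≤ B) :
    |ζ| ≤ B + 1 ∧ |b| ≤ B + 1 ∧ |c| ≤ B + 1 := by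
  obtain ⟨hζ, hb, hc⟩ := hpert
  exact ⟨abs_le_add_one_of_abs_sub_one_le (hζ.trans hδ), by linarith,
    abs_le_add_one_of_abs_sub_one_le (hc.trans hδ)⟩

theorem perturbed_process_stays_small_iterated_log_general {k : ℕ} (hk : 3 ≤ k)
    {Ω : ℕ → Type*} [∀ n, MeasurableSpace (Ω n)] {μ : ∀ n, Measure (Ω n)}
    [∀ n, IsProbabilityMeasure (μ n)] {γ : ℕ → ℝ} (hγpos : ∀ n, 0 < γ n)
    (hγ : ∀ δ > (0 : ℝ), ∀ᶠ n : ℕ in atTop, γ n ≤ (n : ℝ) ^ δ)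
    {X ζ b c Z : ∀ n, ℕ → Ω n → ℝ} (hX0 : ∀ n ω, X n 0 ω = 0)
    (hXrec : ∀ n t ω,
      X n (t + 1) ω = γ n * ζ n t ω * (X n t ω + b n t ω + c n t ω * Z n t ω) ^ (k - 1))
    {v : ℝ≥0} (hv : 0 < v) (hZ : ∀ n t, HasSubgaussianMGF (Z n t) v (μ n))
    {K : ℝ} (hK : 1 ≤ K)
    (hcoeff : ∀ n, ∀ᵐ ω ∂μ n, ∀ t, |ζ n t ω| ≤ K ∧ |b n t ω| ≤ K ∧ |c n t ω| ≤ K)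
    {η ε : ℝ} (hη : 0 < η) (hη1 : η ≤ 1) (hε : 0 < ε) (C' : ℝ) :
    ∀ᶠ n : ℕ in atTop,
      ENNReal.ofReal (1 - (n : ℝ) ^ (-C')) ≤
        μ n {ω | ∀ t ≤ ⌊(1 - η) * logTerm k n (γ n)⌋₊, |X n t ω| ≤ (n : ℝ) ^ ε / 2} := by
  have hgain := isLittleO_logGain hk hγpos hγ
  filter_upwards [tendsto_log_natCast_atTop.eventually_ge_atTop 1,
    eventually_floor_logTerm_le hk hgain hη hη1,
    eventually_mul_exp_neg_log_sq_le_rpow (NNReal.coe_pos.2 hv) C',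
    eventually_pow_floor_logTerm_le_rpow_div_two hk hγpos hgain hη hη1 (zero_lt_one.trans_le hK) hε]
    with n hL1 hT hfail hgrowth
  set T := ⌊(1 - η) * logTerm k n (γ n)⌋₊
  calc ENNReal.ofReal (1 - (n : ℝ) ^ (-C'))
      ≤ ENNReal.ofReal (1 - T * (2 * exp (-log n ^ 2 / (2 * v)))) := by
        gcongr
        exact (by gcongr : _ ≤ _).trans hfail
    _ ≤ μ n {ω | ∀ t ≤ T, |X n t ω| ≤ (K * (γ n + 1 + log n)) ^ (4 * (k - 1) ^ T)} :=
        ofReal_one_sub_le_measure_forall_abs_perturbed_process_le (by lia) (hγpos n).le hK hL1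
          (hX0 n) (hXrec n) (hZ n) (hcoeff n) T
    _ ≤ μ n {ω | ∀ t ≤ T, |X n t ω| ≤ (n : ℝ) ^ ε / 2} :=
        measure_mono fun ω hω t ht => (hω t ht).trans hgrowth

/-- with probability at least `1 − n^{−C'}`, the perturbed polynomial process
stays below `n^ε/2` for the first `⌊(1−η) log_{k−1}(log_{k−1} n / max(log_{k−1} γ_n, 1))⌋`
steps. -/
theorem perturbed_process_stays_small_iterated_log
    (k : ℕ) (hk : 3 ≤ k) (C : ℝ) (hC : 0 < C)
    (Ω : Type) [MeasurableSpace Ω] (μ : Measure Ω) [IsProbabilityMeasure μ]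
    (γ : ℕ → ℝ) (hγpos : ∀ n, 0 < γ n)
    (hγup : Tendsto (fun n : ℕ => Real.log (γ n) / Real.log n) atTop (nhds 0))
    (hγlow : Tendsto (fun n : ℕ => γ n * Real.log n ^ (((k : ℝ) - 2) / 2)) atTop atTop)
    (X ζ b c Z : ℕ → ℕ → Ω → ℝ)
    (hmeas : ∀ n t, Measurable (ζ n t) ∧ Measurable (b n t) ∧ Measurable (c n t) ∧
      Measurable (Z n t))
    (hX0 : ∀ n ω, X n 0 ω = 0)
    (hXrec : ∀ n t ω,
      X n (t + 1) ω = γ n * ζ n t ω * (X n t ω + b n t ω + c n t ω * Z n t ω) ^ (k - 1))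
    (hZlaw : ∀ n t, Measure.map (Z n t) μ = gaussianReal 0 1)
    (hZindep : ∀ n t, Indep (MeasurableSpace.comap (Z n t) inferInstance)
      ((⨆ s ∈ Set.Iic t,
          MeasurableSpace.comap (fun ω => (X n s ω, ζ n s ω, b n s ω, c n s ω)) inferInstance)
        ⊔ (⨆ s ∈ Set.Iio t, MeasurableSpace.comap (Z n s) inferInstance)) μ)
    (hpert : ∀ n, ∀ᵐ ω ∂μ, ∀ t,
      |ζ n t ω - 1| ≤ (C + 1) * (n : ℝ) ^ (-(1 : ℝ) / 6) ∧
      |b n t ω| ≤ (C + 1) * (n : ℝ) ^ (-(1 : ℝ) / 6) ∧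
      |c n t ω - 1| ≤ (C + 1) * (n : ℝ) ^ (-(1 : ℝ) / 6)) :
    ∃ C' : ℝ, 0 < C' ∧ ∀ η : ℝ, 0 < η → η < 1 →
      ∀ᶠ n : ℕ in atTop,
        ENNReal.ofReal (1 - (n : ℝ) ^ (-C'))
          ≤ μ {ω | ∀ t ≤ Nat.floor ((1 - η) * logTerm k n (γ n)),
                |X n t ω| ≤ (n : ℝ) ^ ((6 * (k : ℝ) - 11) / (12 * ((k : ℝ) - 1))) / 2} := by
  have hk' : (3 : ℝ) ≤ k := by exact_mod_cast hk
  have hδ (n : ℕ) : (C + 1) * (n : ℝ) ^ (-(1 : ℝ) / 6) ≤ C + 1 :=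
    mul_le_of_le_one_right (by linarith) (natCast_rpow_le_one_of_neg n (by norm_num))
  exact ⟨1, one_pos, fun η hη hη1 => perturbed_process_stays_small_iterated_log_general hk hγpos
    (fun _ => eventually_le_rpow_of_tendsto_log_div_log hγpos hγup) hX0 hXrec one_pos
    (fun n t => hasSubgaussianMGF_of_map_eq_gaussianReal (hZlaw n t)) (by linarith)
    (fun n => (hpert n).mono fun _ hω t => abs_coeff_le_of_abs_perturbation_le (hω t) (hδ n))
    hη hη1.le (div_pos (by linarith) (by linarith)) 1⟩
end
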